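/- Let (Ω, μ) be a measure space with μ(Ω) < ∞, let λ > 0, ε > 0, D > 0, c > 0, and let p, q, u, v : Ω → ℝ be measurable functions with c ≤ u(x) ≤ D and c ≤ v(x) for all x ∈ Ω, and with p² - q² and u - v integrable. Define A = { x ∈ Ω : p(x)² ≤ 1 - (λ+ε)²/u(x)² } and B = { x ∈ Ω : q(x)² ≤ 1 - λ²/v(x)² }, and set K = (2ελ + ε²)/D². Then μ(A \ B) ≤ (2/K) ∫_Ω |q(x)² - p(x)²| dμ(x) + (4λ²/(c³ K)) ∫_Ω |u(x) - v(x)| dμ(x). -/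

import Mathlib

open MeasureTheory

/-- Abstract, quantitative form of the convergence in measure of the discrete elastic
sets: with `A = {p² ≤ 1 - (λ+ε)²/u²}`, `B = {q² ≤ 1 - λ²/v²}` and
`K = (2ελ + ε²)/D²`, one has
`μ(A \ B) ≤ (2/K) ∫ |q² - p²| + (4λ²/(c³ K)) ∫ |u - v|`. -/
theorem stmt_9 {Ω : Type*} [MeasurableSpace Ω] (μ : Measure Ω) [IsFiniteMeasure μ]
    (lam ε D c : ℝ) (hlam : 0 < lam) (hε : 0 < ε) (hD : 0 < D) (hc : 0 < c)
    (p q u v : Ω → ℝ)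
    (hp : Measurable p) (hq : Measurable q) (hu : Measurable u) (hv : Measurable v)
    (huc : ∀ x, c ≤ u x) (huD : ∀ x, u x ≤ D) (hvc : ∀ x, c ≤ v x)
    (hpq : Integrable (fun x => p x ^ 2 - q x ^ 2) μ)
    (huv : Integrable (fun x => u x - v x) μ)
    (A B : Set Ω)
    (hA : A = {x | p x ^ 2 ≤ 1 - (lam + ε) ^ 2 / u x ^ 2})
    (hB : B = {x | q x ^ 2 ≤ 1 - lam ^ 2 / v x ^ 2})
    (K : ℝ) (hK : K = (2 * ε * lam + ε ^ 2) / D ^ 2) :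
    (μ (A \ B)).toReal ≤
      (2 / K) * ∫ x, |q x ^ 2 - p x ^ 2| ∂μ +
        (4 * lam ^ 2 / (c ^ 3 * K)) * ∫ x, |u x - v x| ∂μ := by
  have hKpos : 0 < K := by rw [hK]; positivity
  set g : Ω → ℝ := fun x => |q x ^ 2 - p x ^ 2| + (2 * lam ^ 2 / c ^ 3) * |u x - v x| with hg
  have i1 : Integrable (fun x => |q x ^ 2 - p x ^ 2|) μ := by
    have h := hpq.abs
    simpa only [abs_sub_comm] using h
  have i2 : Integrable (fun x => |u x - v x|) μ := huv.abs
  have i3 : Integrable (fun x => (2 * lam ^ 2 / c ^ 3) * |u x - v x|) μ := i2.const_mul _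
  have hgi : Integrable g μ := i1.add i3
  have hg0 : ∀ x, 0 ≤ g x := fun x => by simp only [hg]; positivity
  have hsub : A \ B ⊆ {x | K ≤ g x} := by
    rintro x ⟨hxA, hxB⟩
    rw [hA] at hxA
    rw [hB] at hxB
    simp only [Set.mem_setOf_eq, not_le] at hxA hxB ⊢
    have hu0 : 0 < u x := hc.trans_le (huc x)
    have hv0 : 0 < v x := hc.trans_le (hvc x)
    have h1 : K ≤ (2 * ε * lam + ε ^ 2) / u x ^ 2 := by
      rw [hK]
      have := huD x
      gcongr
    have e1 : 1 / v x ^ 2 - 1 / u x ^ 2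
        = (u x - v x) * ((1 / u x) * (1 / v x) * (1 / u x + 1 / v x)) := by
      field_simp
      ring
    have b1 : 1 / u x ≤ 1 / c := one_div_le_one_div_of_le hc (huc x)
    have b2 : 1 / v x ≤ 1 / c := one_div_le_one_div_of_le hc (hvc x)
    have b3 : (1 / u x) * (1 / v x) * (1 / u x + 1 / v x) ≤ 2 / c ^ 3 := by
      calc (1 / u x) * (1 / v x) * (1 / u x + 1 / v x)
          ≤ (1 / c) * (1 / c) * (1 / c + 1 / c) := by gcongr
        _ = 2 / c ^ 3 := by field_simp; norm_num
    have h2 : 1 / v x ^ 2 - 1 / u x ^ 2 ≤ |u x - v x| * (2 / c ^ 3) := by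
      rw [e1]
      calc _ ≤ |u x - v x| * ((1 / u x) * (1 / v x) * (1 / u x + 1 / v x)) := by
            gcongr
            exact le_abs_self _
        _ ≤ _ := by gcongr
    have h3 := mul_le_mul_of_nonneg_left h2 (sq_nonneg lam)
    have e2 : (lam + ε) ^ 2 / u x ^ 2 - lam ^ 2 / v x ^ 2
        = (2 * ε * lam + ε ^ 2) / u x ^ 2 - lam ^ 2 * (1 / v x ^ 2 - 1 / u x ^ 2) := by
      ring
    have e3 : lam ^ 2 * (|u x - v x| * (2 / c ^ 3)) = (2 * lam ^ 2 / c ^ 3) * |u x - v x| := by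
      ring
    have h4 := le_abs_self (q x ^ 2 - p x ^ 2)
    simp only [hg]
    linarith
  have hm := mul_meas_ge_le_integral_of_nonneg (Filter.Eventually.of_forall hg0) hgi K
  have hmono : (μ (A \ B)).toReal ≤ μ.real {x | K ≤ g x} := measureReal_mono hsub
  have hint : ∫ x, g x ∂μ = ∫ x, |q x ^ 2 - p x ^ 2| ∂μ
      + (2 * lam ^ 2 / c ^ 3) * ∫ x, |u x - v x| ∂μ := by
    rw [← integral_const_mul]
    exact integral_add i1 i3
  have hgn : 0 ≤ ∫ x, g x ∂μ := integral_nonneg hg0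
  have hfin : (μ (A \ B)).toReal ≤ (∫ x, g x ∂μ) / K := by
    rw [le_div_iff₀ hKpos]
    nlinarith
  have h2 : (2 / K) * ∫ x, |q x ^ 2 - p x ^ 2| ∂μ +
        (4 * lam ^ 2 / (c ^ 3 * K)) * ∫ x, |u x - v x| ∂μ = 2 * ((∫ x, g x ∂μ) / K) := by
    rw [hint]
    field_simp
    ring
  have h5 : 0 ≤ (∫ x, g x ∂μ) / K := by positivity
  rw [h2]
  linarith
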